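/- Let Φ(x) be smooth with all relevant Wronskians nonvanishing, Φ^{(j)} = ∂_x^j Φ, and define Φ_{2n} = W_{n+1}[Φ, Φ^{(1)}, …, Φ^{(n)}]/W_n[Φ, Φ^{(1)}, …, Φ^{(n−1)}] and Φ_{2n+1} = W_{n+1}[Φ^{(1)}, …, Φ^{(n+1)}]/W_n[Φ^{(1)}, …, Φ^{(n)}]. Then these Wronskian ratios satisfy the super-Toda relation ∂_x ln Φ_k = Φ_{k+1}/Φ_k + Φ_k/Φ_{k−1} for all k ≥ 1. -/

import Mathlib

/-- Wronskian determinant `W_n[g_1,…,g_n](x) = det(∂_x^{i−1} g_j)`. -/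
noncomputable def wronskian (n : ℕ) (g : Fin n → ℝ → ℝ) (x : ℝ) : ℝ :=
  Matrix.det (Matrix.of fun i j : Fin n => iteratedDeriv (i : ℕ) (g j) x)

/-- `W_n[Φ, Φ^{(1)}, …, Φ^{(n−1)}]`. -/
noncomputable def WA (Φ : ℝ → ℝ) (n : ℕ) (x : ℝ) : ℝ :=
  wronskian n (fun j => iteratedDeriv (j : ℕ) Φ) x

/-- `W_n[Φ^{(1)}, …, Φ^{(n)}]`. -/
noncomputable def WB (Φ : ℝ → ℝ) (n : ℕ) (x : ℝ) : ℝ :=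
  wronskian n (fun j => iteratedDeriv ((j : ℕ) + 1) Φ) x

/-- The Wronskian-ratio chain:
`Φ_{2n} = W_{n+1}[Φ,…,Φ^{(n)}]/W_n[Φ,…,Φ^{(n−1)}]`,
`Φ_{2n+1} = W_{n+1}[Φ^{(1)},…,Φ^{(n+1)}]/W_n[Φ^{(1)},…,Φ^{(n)}]`. -/
noncomputable def PhiDB (Φ : ℝ → ℝ) (k : ℕ) (x : ℝ) : ℝ :=
  if k % 2 = 0 then WA Φ (k / 2 + 1) x / WA Φ (k / 2) x
  else WB Φ (k / 2 + 1) x / WB Φ (k / 2) x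


/-- determinant of the leading `n × n` block of an infinite array. -/
noncomputable def dd (n : ℕ) (K : ℕ → ℕ → ℝ) : ℝ :=
  Matrix.det (Matrix.of fun i j : Fin n => K (i : ℕ) (j : ℕ))

/-- replace index `m` by `m+1`. -/
def sw (m i : ℕ) : ℕ := if i = m then m + 1 else i

lemma dd_congr {n : ℕ} {K L : ℕ → ℕ → ℝ} (h : ∀ i < n, ∀ j < n, K i j = L i j) :
    dd n K = dd n L := by
  unfold dd
  congr 1
  ext i j
  exact h i i.2 j j.2

lemma dd_schur_one (m : ℕ) (K : ℕ → ℕ → ℝ)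
    [Invertible (Matrix.of fun i j : Fin m => K (i : ℕ) (j : ℕ))] :
    dd (m + 1) K = dd m K * (K m m - ((Matrix.of fun (_ : Fin 1) (j : Fin m) => K m j) *
      ⅟(Matrix.of fun i j : Fin m => K (i : ℕ) (j : ℕ)) *
      (Matrix.of fun (i : Fin m) (_ : Fin 1) => K i m)) 0 0) := by
  have h := Matrix.det_fromBlocks₁₁ (Matrix.of fun i j : Fin m => K (i : ℕ) (j : ℕ))
    (Matrix.of fun (i : Fin m) (_ : Fin 1) => K i m)
    (Matrix.of fun (_ : Fin 1) (j : Fin m) => K m j)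
    (Matrix.of fun (_ : Fin 1) (_ : Fin 1) => K m m)
  rw [Matrix.det_fin_one] at h
  unfold dd
  rw [← Matrix.det_submatrix_equiv_self (finSumFinEquiv : Fin m ⊕ Fin 1 ≃ Fin (m + 1))]
  rw [Matrix.sub_apply] at h
  refine Eq.trans ?_ h
  congr 1
  ext i j
  rcases i with i | i <;> rcases j with j | j <;> simp

lemma dd_schur_two (m : ℕ) (K : ℕ → ℕ → ℝ)
    [Invertible (Matrix.of fun i j : Fin m => K (i : ℕ) (j : ℕ))] :
    dd (m + 2) K = dd m K * Matrix.det ((Matrix.of fun (i j : Fin 2) => K (m + i) (m + j)) -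
      (Matrix.of fun (i : Fin 2) (j : Fin m) => K (m + i) j) *
      ⅟(Matrix.of fun i j : Fin m => K (i : ℕ) (j : ℕ)) *
      (Matrix.of fun (i : Fin m) (j : Fin 2) => K i (m + j))) := by
  have h := Matrix.det_fromBlocks₁₁ (Matrix.of fun i j : Fin m => K (i : ℕ) (j : ℕ))
    (Matrix.of fun (i : Fin m) (j : Fin 2) => K i (m + j))
    (Matrix.of fun (i : Fin 2) (j : Fin m) => K (m + i) j)
    (Matrix.of fun (i j : Fin 2) => K (m + i) (m + j))
  unfold dd
  rw [← Matrix.det_submatrix_equiv_self (finSumFinEquiv : Fin m ⊕ Fin 2 ≃ Fin (m + 2))]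
  refine Eq.trans ?_ h
  congr 1
  ext i j
  rcases i with i | i <;> rcases j with j | j <;> simp

lemma sw_lt {m i : ℕ} (h : i < m) : sw m i = i := by simp [sw, h.ne]

lemma sw_self (m : ℕ) : sw m m = m + 1 := by simp [sw]

/-- Jacobi (Desnanot–Dodgson) identity for an invertible core. -/
lemma dd_jacobi (m : ℕ) (K : ℕ → ℕ → ℝ) (h0 : dd m K ≠ 0) :
    dd (m + 2) K * dd m K
      = dd (m + 1) K * dd (m + 1) (fun i j => K (sw m i) (sw m j))
        - dd (m + 1) (fun i j => K (sw m i) j) * dd (m + 1) (fun i j => K i (sw m j)) := by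
  have gen : ∀ r c : ℕ → ℕ, (∀ i < m, r i = i) → (∀ i < m, c i = i) →
      dd (m + 1) (fun i j => K (r i) (c j)) = dd m K * (K (r m) (c m) -
      ((Matrix.of fun (_ : Fin 1) (j : Fin m) => K (r m) j) *
      (Matrix.of fun i j : Fin m => K (i : ℕ) (j : ℕ))⁻¹ *
      (Matrix.of fun (i : Fin m) (_ : Fin 1) => K i (c m))) 0 0) := by
    intro r c hr hc
    have e : (Matrix.of fun i j : Fin m => K (r i) (c j))
        = (Matrix.of fun i j : Fin m => K (i : ℕ) (j : ℕ)) := by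
      ext i j; simp [hr i i.2, hc j j.2]
    have hu : IsUnit (Matrix.det (Matrix.of fun i j : Fin m => K (r i) (c j))) := by
      rw [e]; exact isUnit_iff_ne_zero.mpr h0
    let _ := Matrix.invertibleOfIsUnitDet _ hu
    rw [dd_schur_one m (fun i j => K (r i) (c j)), Matrix.invOf_eq_nonsing_inv, e]
    have e2 : dd m (fun i j => K (r i) (c j)) = dd m K :=
      dd_congr fun i hi j hj => by rw [hr i hi, hc j hj]
    rw [e2]
    simp only [Fin.is_lt, hr, hc]
  have hu : IsUnit (Matrix.det (Matrix.of fun i j : Fin m => K (i : ℕ) (j : ℕ))) :=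
    isUnit_iff_ne_zero.mpr h0
  let _ := Matrix.invertibleOfIsUnitDet _ hu
  have g1 := gen id id (fun _ _ => rfl) (fun _ _ => rfl)
  have g2 := gen (sw m) (sw m) (fun _ h => sw_lt h) (fun _ h => sw_lt h)
  have g3 := gen (sw m) id (fun _ h => sw_lt h) (fun _ _ => rfl)
  have g4 := gen id (sw m) (fun _ _ => rfl) (fun _ h => sw_lt h)
  simp only [id, sw_self] at g1 g2 g3 g4
  rw [g2, g3, g4, show dd (m + 1) K = _ from g1, dd_schur_two, Matrix.invOf_eq_nonsing_inv,
    Matrix.det_fin_two]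
  simp only [Matrix.sub_apply, Matrix.mul_apply, Matrix.of_apply, Fin.val_zero, Fin.val_one,
    add_zero]
  ring

lemma dd_last_col (n : ℕ) (L : ℕ → ℕ → ℝ) (h0 : L 0 n = 1)
    (h : ∀ i, 0 < i → i ≤ n → L i n = 0) :
    dd (n + 1) L = (-1) ^ n * dd n (fun i j => L (i + 1) j) := by
  unfold dd
  rw [Matrix.det_succ_column _ (Fin.last n), Finset.sum_eq_single 0]
  · simp only [Matrix.of_apply, Fin.val_zero, Fin.val_last, h0, zero_add, mul_one]
    congr 2
    ext i j
    simp
  · intro b _ hb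
    have : L (b : ℕ) n = 0 := h _ (Fin.pos_iff_ne_zero.mpr hb) (by omega)
    simp [this]
  · simp

lemma bilin_one (a : ℕ → ℝ) (m : ℕ) (h0 : dd (m + 1) (fun i j => a (i + j)) ≠ 0) :
    dd (m + 2) (fun i j => a (sw (m + 1) i + j)) * dd (m + 1) (fun i j => a (i + j + 1))
      - dd (m + 2) (fun i j => a (i + j)) * dd (m + 1) (fun i j => a (sw m i + j + 1))
      = dd (m + 2) (fun i j => a (i + j + 1)) * dd (m + 1) (fun i j => a (i + j)) := by
  let K : ℕ → ℕ → ℝ := fun i j => if j = m + 2 then (if i = 0 then 1 else 0) else a (i + j)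
  have k0 : dd (m + 1) K = dd (m + 1) (fun i j => a (i + j)) :=
    dd_congr fun i hi j hj => by simp only [K]; rw [if_neg (by omega)]
  have k1 : dd (m + 2) K = dd (m + 2) (fun i j => a (i + j)) :=
    dd_congr fun i hi j hj => by simp only [K]; rw [if_neg (by omega)]
  have k2 : dd (m + 2) (fun i j => K (sw (m + 1) i) j)
      = dd (m + 2) (fun i j => a (sw (m + 1) i + j)) :=
    dd_congr fun i hi j hj => by simp only [K]; rw [if_neg (by omega)]
  have k3 : dd (m + 3) K = (-1) ^ (m + 2) * dd (m + 2) (fun i j => a (i + j + 1)) := by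
    rw [dd_last_col (m + 2) K (by simp [K]) (fun i hi _ => by simp [K, hi.ne'])]
    congr 1
    exact dd_congr fun i hi j hj => by
      simp only [K]; rw [if_neg (by omega)]; congr 1; omega
  have k4 : dd (m + 2) (fun i j => K i (sw (m + 1) j))
      = (-1) ^ (m + 1) * dd (m + 1) (fun i j => a (i + j + 1)) := by
    rw [dd_last_col (m + 1) _ (by simp [K, sw]) (fun i hi _ => by simp [K, sw, hi.ne'])]
    congr 1
    exact dd_congr fun i hi j hj => by
      simp only [K]; rw [sw_lt hj, if_neg (by omega)]; congr 1; omega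
  have k5 : dd (m + 2) (fun i j => K (sw (m + 1) i) (sw (m + 1) j))
      = (-1) ^ (m + 1) * dd (m + 1) (fun i j => a (sw m i + j + 1)) := by
    rw [dd_last_col (m + 1) _ (by simp [K, sw]) (fun i hi _ => by
      have hne : sw (m + 1) i ≠ 0 := by
        unfold sw; split_ifs <;> omega
      simp [K, sw_self, hne])]
    congr 1
    exact dd_congr fun i hi j hj => by
      simp only [K]; rw [sw_lt hj, if_neg (by omega)]; congr 1; unfold sw; split_ifs <;> omega
  have J := dd_jacobi (m + 1) K (by rw [k0]; exact h0)
  rw [k0, k3] at J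
  change _ = dd (m + 2) K * dd (m + 2) _ - dd (m + 2) _ * dd (m + 2) _ at J
  rw [k1, k2, k4, k5] at J
  have hs : ((-1 : ℝ) ^ (m + 1)) ≠ 0 := pow_ne_zero _ (by norm_num)
  apply mul_left_cancel₀ hs
  rw [pow_succ _ (m + 1)] at J
  linear_combination J

lemma bilin_two (a : ℕ → ℝ) (m : ℕ) (h0 : dd m (fun i j => a (i + j + 1)) ≠ 0) :
    dd (m + 1) (fun i j => a (sw m i + j + 1)) * dd (m + 1) (fun i j => a (i + j))
      - dd (m + 1) (fun i j => a (i + j + 1)) * dd (m + 1) (fun i j => a (sw m i + j))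
      = dd (m + 2) (fun i j => a (i + j)) * dd m (fun i j => a (i + j + 1)) := by
  let t : ℕ → ℕ := fun j => if j < m then j + 1 else if j = m then 0 else j
  let K : ℕ → ℕ → ℝ := fun i j => a (i + t j)
  have t1 : ∀ j : Fin (m + 1), ((finRotate (m + 1) j : Fin (m + 1)) : ℕ) = t j := by
    intro j
    by_cases hj : j = Fin.last m
    · subst hj; simp [t]
    · rw [coe_finRotate_of_ne_last hj]
      have : (j : ℕ) < m := Fin.val_lt_last hj
      simp [t, this]
  have perm1 : ∀ b : ℕ → ℕ → ℝ, dd (m + 1) (fun i j => b i (t j)) = (-1) ^ m * dd (m + 1) b := by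
    intro b
    have := Matrix.det_permute' (finRotate (m + 1))
      (Matrix.of fun i j : Fin (m + 1) => b (i : ℕ) (j : ℕ))
    rw [sign_finRotate] at this
    simp only [Nat.add_sub_cancel, Units.val_pow_eq_pow_val, Units.val_neg, Units.val_one,
      Int.cast_pow, Int.cast_neg, Int.cast_one] at this
    unfold dd
    rw [← this]
    congr 1
    ext i j
    simp only [Matrix.of_apply, Matrix.submatrix_apply, id, t1]
  have perm2 : ∀ b : ℕ → ℕ → ℝ, dd (m + 2) (fun i j => b i (t j)) = (-1) ^ m * dd (m + 2) b := by
    intro b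
    let p : Fin (m + 2) := ⟨m, by omega⟩
    let q : Fin (m + 2) := Fin.last (m + 1)
    have hpq : p ≠ q := by simp [p, q, Fin.ext_iff]
    have := Matrix.det_permute' ((finRotate (m + 2)) * Equiv.swap p q)
      (Matrix.of fun i j : Fin (m + 2) => b (i : ℕ) (j : ℕ))
    rw [Equiv.Perm.sign_mul, sign_finRotate, Equiv.Perm.sign_swap hpq] at this
    simp only [Nat.add_succ_sub_one, Units.val_pow_eq_pow_val, Units.val_neg, Units.val_one,
      Units.val_mul, Int.cast_mul, Int.cast_pow, Int.cast_neg, Int.cast_one] at this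
    unfold dd
    rw [show ((-1 : ℝ) ^ m) = (-1) ^ (m + 1) * (-1) by ring, ← this]
    congr 1
    ext i j
    simp only [Matrix.of_apply, Matrix.submatrix_apply, id, Equiv.Perm.mul_apply]
    congr 1
    by_cases h1 : j = p
    · subst h1
      rw [Equiv.swap_apply_left, finRotate_last]; simp [t, p]
    by_cases h2 : j = q
    · rw [h2, Equiv.swap_apply_right, coe_finRotate_of_ne_last hpq]; simp [t, p, q]
    rw [Equiv.swap_apply_of_ne_of_ne h1 h2, coe_finRotate_of_ne_last h2]
    have h3 : (j : ℕ) ≠ m := fun h => h1 (Fin.ext h)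
    have h4 : (j : ℕ) ≠ m + 1 := fun h => h2 (Fin.ext h)
    have : (j : ℕ) < m := by omega
    simp [t, this]
  have ts : ∀ j < m + 1, t (sw m j) = j + 1 := by
    intro j hj
    by_cases h : j = m
    · subst h; simp [t, sw]
    · have : j < m := by omega
      simp [sw_lt this, t, this]
  have k0 : dd m K = dd m (fun i j => a (i + j + 1)) :=
    dd_congr fun i hi j hj => by simp [K, t, hj, add_assoc]
  have J := dd_jacobi m K (by rw [k0]; exact h0)
  have k4 : dd (m + 1) (fun i j => K i (sw m j)) = dd (m + 1) (fun i j => a (i + j + 1)) :=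
    dd_congr fun i hi j hj => by simp only [K]; rw [ts j hj, add_assoc]
  have k5 : dd (m + 1) (fun i j => K (sw m i) (sw m j))
      = dd (m + 1) (fun i j => a (sw m i + j + 1)) :=
    dd_congr fun i hi j hj => by simp only [K]; rw [ts j hj, add_assoc]
  rw [k0, k4, k5, show dd (m + 2) K = _ from perm2 (fun i j => a (i + j)),
    show dd (m + 1) K = _ from perm1 (fun i j => a (i + j)),
    show dd (m + 1) (fun i j => K (sw m i) j) = _ from perm1 (fun i j => a (sw m i + j))] at J
  have hs : ((-1 : ℝ) ^ m) ≠ 0 := pow_ne_zero _ (by norm_num)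
  apply mul_left_cancel₀ hs
  linear_combination -J

lemma hasDerivAt_dd (a : ℕ → ℝ → ℝ) (x : ℝ) (ha : ∀ k, HasDerivAt (a k) (a (k + 1) x) x) (m : ℕ) :
    HasDerivAt (fun y => dd (m + 1) (fun i j => a (i + j) y))
      (dd (m + 1) (fun i j => a (sw m i + j) x)) x := by
  have h1 : HasDerivAt (fun y => dd (m + 1) (fun i j => a (i + j) y))
      (∑ c : Fin (m + 1), Matrix.det (Matrix.updateCol
        (Matrix.of fun i j : Fin (m + 1) => a (i + j) x) c
        (fun i => a (i + c + 1) x))) x := by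
    simp only [dd, Matrix.det_apply', Matrix.of_apply]
    rw [Finset.sum_comm]
    refine HasDerivAt.fun_sum fun σ _ => ?_
    rw [← Finset.mul_sum]
    refine HasDerivAt.const_mul _ ?_
    refine (HasDerivAt.fun_finsetProd (fun i _ => ha _)).congr_deriv ?_
    refine Finset.sum_congr rfl fun c _ => ?_
    rw [← Finset.mul_prod_erase _ _ (Finset.mem_univ c), smul_eq_mul, mul_comm]
    congr 1
    · simp
    · refine Finset.prod_congr rfl fun d hd => ?_
      rw [Matrix.updateCol_ne (Finset.ne_of_mem_erase hd)]; rfl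
  refine h1.congr_deriv ?_
  rw [Finset.sum_eq_single (Fin.last m)]
  · unfold dd
    rw [← Matrix.det_transpose]
    congr 1
    ext i j
    simp only [Matrix.transpose_apply, Matrix.of_apply]
    by_cases h : i = Fin.last m
    · subst h; simp [sw]; congr 1; omega
    · rw [Matrix.updateCol_ne h, sw_lt (Fin.val_lt_last h), Matrix.of_apply, add_comm]
  · intro c _ hc
    have hlt : (c : ℕ) < m := Fin.val_lt_last hc
    let d : Fin (m + 1) := ⟨c + 1, by omega⟩
    have hcd : c ≠ d := by simp [d, Fin.ext_iff]
    refine Matrix.det_zero_of_column_eq hcd fun k => ?_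
    rw [Matrix.updateCol_self, Matrix.updateCol_ne hcd.symm]
    simp [d, add_assoc]
  · simp

lemma itd_add (Φ : ℝ → ℝ) (i j : ℕ) :
    iteratedDeriv i (iteratedDeriv j Φ) = iteratedDeriv (i + j) Φ := by
  simp only [iteratedDeriv_eq_iterate, Function.iterate_add_apply]

lemma WA_eq (Φ : ℝ → ℝ) (n : ℕ) (x : ℝ) :
    WA Φ n x = dd n (fun i j => iteratedDeriv (i + j) Φ x) := by
  simp only [WA, wronskian, dd, itd_add]

lemma WB_eq (Φ : ℝ → ℝ) (n : ℕ) (x : ℝ) :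
    WB Φ n x = dd n (fun i j => iteratedDeriv (i + j + 1) Φ x) := by
  simp only [WB, wronskian, dd, itd_add, add_assoc]

lemma itd_hasDerivAt (Φ : ℝ → ℝ) (hΦ : ContDiff ℝ (⊤ : ℕ∞) Φ) (k : ℕ) (x : ℝ) :
    HasDerivAt (iteratedDeriv k Φ) (iteratedDeriv (k + 1) Φ x) x := by
  rw [iteratedDeriv_succ]
  exact ((hΦ.differentiable_iteratedDeriv k (by exact_mod_cast WithTop.coe_lt_top k)) x).hasDerivAt

lemma WA_deriv (Φ : ℝ → ℝ) (hΦ : ContDiff ℝ (⊤ : ℕ∞) Φ) (m : ℕ) (x : ℝ) :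
    HasDerivAt (WA Φ (m + 1)) (dd (m + 1) (fun i j => iteratedDeriv (sw m i + j) Φ x)) x := by
  have := hasDerivAt_dd (fun k => iteratedDeriv k Φ) x (fun k => itd_hasDerivAt Φ hΦ k x) m
  rwa [← funext (WA_eq Φ (m + 1))] at this

lemma WB_deriv (Φ : ℝ → ℝ) (hΦ : ContDiff ℝ (⊤ : ℕ∞) Φ) (m : ℕ) (x : ℝ) :
    HasDerivAt (WB Φ (m + 1)) (dd (m + 1) (fun i j => iteratedDeriv (sw m i + j + 1) Φ x)) x := by
  have := hasDerivAt_dd (fun k => iteratedDeriv (k + 1) Φ) x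
    (fun k => itd_hasDerivAt Φ hΦ (k + 1) x) m
  rwa [← funext (WB_eq Φ (m + 1))] at this

lemma W_zero (Φ : ℝ → ℝ) : WA Φ 0 = (fun _ => 1) ∧ WB Φ 0 = (fun _ => 1) := by
  constructor <;> ext x <;> simp [WA, WB, wronskian]

/-- Both bilinear relations. -/
lemma bilin (Φ : ℝ → ℝ) (hΦ : ContDiff ℝ (⊤ : ℕ∞) Φ)
    (hA : ∀ n x, WA Φ n x ≠ 0) (hB : ∀ n x, WB Φ n x ≠ 0) (x : ℝ) :
    ∃ A' B' : ℕ → ℝ, (∀ n, HasDerivAt (WA Φ n) (A' n) x) ∧ (∀ n, HasDerivAt (WB Φ n) (B' n) x) ∧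
      (∀ n, A' (n + 1) * WB Φ n x - WA Φ (n + 1) x * B' n = WB Φ (n + 1) x * WA Φ n x) ∧
      (∀ n, B' (n + 1) * WA Φ (n + 1) x - WB Φ (n + 1) x * A' (n + 1)
        = WA Φ (n + 2) x * WB Φ n x) := by
  refine ⟨fun n => Nat.casesOn n 0 fun m => dd (m + 1) (fun i j => iteratedDeriv (sw m i + j) Φ x),
    fun n => Nat.casesOn n 0 fun m => dd (m + 1) (fun i j => iteratedDeriv (sw m i + j + 1) Φ x),
    ?_, ?_, ?_, ?_⟩
  · rintro (_ | m)
    · rw [(W_zero Φ).1]; exact hasDerivAt_const _ _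
    · exact WA_deriv Φ hΦ m x
  · rintro (_ | m)
    · rw [(W_zero Φ).2]; exact hasDerivAt_const _ _
    · exact WB_deriv Φ hΦ m x
  · rintro (_ | m)
    · simp [WA_eq, WB_eq, dd, sw]
    · have h := hA (m + 1) x
      simp only [WA_eq, WB_eq] at h ⊢
      exact bilin_one (fun k => iteratedDeriv k Φ x) m h
  · intro m
    have h := hB m x
    simp only [WA_eq, WB_eq] at h ⊢
    exact bilin_two (fun k => iteratedDeriv k Φ x) m h

theorem stmt_9 (Φ : ℝ → ℝ) (hΦ : ContDiff ℝ (⊤ : ℕ∞) Φ)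
    (hA : ∀ n x, WA Φ n x ≠ 0) (hB : ∀ n x, WB Φ n x ≠ 0) :
    ∀ k, 1 ≤ k → ∀ x,
      deriv (PhiDB Φ k) x / PhiDB Φ k x
        = PhiDB Φ (k+1) x / PhiDB Φ k x + PhiDB Φ k x / PhiDB Φ (k-1) x := by
  intro k hk x
  obtain ⟨A', B', dA, dB, h1, h2⟩ := bilin Φ hΦ hA hB x
  rcases Nat.even_or_odd' k with ⟨n, rfl | rfl⟩
  · obtain ⟨n, rfl⟩ : ∃ m, n = m + 1 := ⟨n - 1, by omega⟩
    have e0 : PhiDB Φ (2 * (n + 1)) = fun y => WA Φ (n + 2) y / WA Φ (n + 1) y := by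
      ext y; simp [PhiDB]
    have e1 : PhiDB Φ (2 * (n + 1) + 1) x = WB Φ (n + 2) x / WB Φ (n + 1) x := by
      simp only [PhiDB]; rw [if_neg (by omega), show (2 * (n + 1) + 1) / 2 = n + 1 by omega]
    have e2 : PhiDB Φ (2 * (n + 1) - 1) x = WB Φ (n + 1) x / WB Φ n x := by
      simp only [PhiDB]; rw [if_neg (by omega), show (2 * (n + 1) - 1) / 2 = n by omega]
    rw [e1, e2, e0, ((dA (n + 2)).fun_div (dA (n + 1)) (hA _ x)).deriv]
    have i1 := h1 (n + 1)
    have i2 := h2 n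
    have n1 := hA (n + 1) x
    have n2 := hA (n + 2) x
    have n3 := hB (n + 1) x
    have n4 := hB (n + 2) x
    have n5 := hB n x
    simp only [add_assoc, Nat.reduceAdd] at i1 i2
    field_simp
    linear_combination WA Φ (n + 1) x * i1 + WA Φ (n + 2) x * i2
  · have e0 : PhiDB Φ (2 * n + 1) = fun y => WB Φ (n + 1) y / WB Φ n y := by
      ext y; simp only [PhiDB]; rw [if_neg (by omega), show (2 * n + 1) / 2 = n by omega]
    have e1 : PhiDB Φ (2 * n + 1 + 1) x = WA Φ (n + 2) x / WA Φ (n + 1) x := by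
      simp only [PhiDB]; rw [if_pos (by omega), show (2 * n + 1 + 1) / 2 = n + 1 by omega]
    have e2 : PhiDB Φ (2 * n + 1 - 1) x = WA Φ (n + 1) x / WA Φ n x := by
      simp only [PhiDB]; rw [if_pos (by omega), show (2 * n + 1 - 1) / 2 = n by omega]
    rw [e1, e2, e0, ((dB (n + 1)).fun_div (dB n) (hB _ x)).deriv]
    have i1 := h1 n
    have i2 := h2 n
    have n1 := hA (n + 1) x
    have n2 := hA (n + 2) x
    have n3 := hB (n + 1) x
    have n4 := hA n x
    have n5 := hB n x
    field_simp
    linear_combination WB Φ (n + 1) x * i1 + WB Φ n x * i2
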